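/- Let d ≥ 1. There exists a constant C_d, depending only on d, such that for every n ∈ ℕ^d and every negatively associated field {Y_k : k ≤ n} of random variables with E[Y_k] = 0 and E[Y_k²] < ∞, setting T_k = Σ_{i ≤ k} Y_i and M_n = max_{k ≤ n} |T_k|, one has E[M_n] ≤ C_d ( Σ_{k ≤ n} E[Y_k²] )^{1/2}. -/

import Mathlib

/-!
The proof is a chaining argument with a truncation level adapted to the scale. Fix `G` dominating
the total second moment of a (sub)family, and truncate every variable at `√G` and centre it.

Without any maximum, the sum has fourth moment `O(G ^ 2)` (`fourth_moment_le`): negative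
association bounds its Laplace transform at `± 1 / (2 √G)` by a product, and each factor is at most
`exp (E Y² / (4 G))`. Non-decreasing transforms preserve negative association, so truncations are
covered.

The maximum is built up one coordinate at a time (`MaxBound.step`). Given the bound
`E max (...) ^ 4 ≤ K G ^ 2` for sums over `A ∈ 𝓐`, consider the sets `A ∩ {c ≤ k}`. A median value of
`c` for the weights `E Y²` splits the family into a left part, a slab and a right part, the left and
right parts having total second moment at most `G / 2`. The sums over `left ∪ slab` are controlled
by the previous bound. Recursively, the left and right maxima, now truncated at `√(G / 2)`, have
fourth moments at most `L (G / 2) ^ 2`; lowering the truncation level costs `O(G ^ 2)`, because the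
absolute sum of the bands between `√(G / 2)` and `√G` has mean `O(√G)` and fourth central moment
`O(G ^ 2)` (`level_change`). Since `(x + y) ^ 4 ≤ (3 / 2) x ^ 4 + A y ^ 4`, the recursion closes:
`(3 / 2) * 2 * (1 / 4) = 3 / 4 < 1`.

After `d` steps, the maximum over rectangles of the truncated sums is `O(√G)` in mean, and the
discarded tails satisfy `∑ E |Y - clip Y| ≤ ∑ E Y² / √G ≤ √G`.
-/

open MeasureTheory Filter Finset

noncomputable section

/-- `plog x = ln (max x e)`, the truncated logarithm used in the paper. -/
def plog (x : ℝ) : ℝ := Real.log (max x (Real.exp 1))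

/-- A family of real random variables `X i`, `i ∈ S`, is *negatively associated* if for every
pair of disjoint finite subsets `A`, `B` of `S` and all coordinatewise non-decreasing functions
`f`, `g`, one has `Cov (f (X_i, i ∈ A), g (X_j, j ∈ B)) ≤ 0`, whenever the covariance exists. -/
def NegAssocOn {Ω : Type} [MeasurableSpace Ω] (μ : Measure Ω) {ι : Type}
    (X : ι → Ω → ℝ) (S : Set ι) : Prop :=
  ∀ A B : Finset ι, ↑A ⊆ S → ↑B ⊆ S → Disjoint A B →
    ∀ (f : (↥A → ℝ) → ℝ) (g : (↥B → ℝ) → ℝ), Monotone f → Monotone g →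
      Integrable (fun ω => f (fun i => X i ω)) μ →
      Integrable (fun ω => g (fun j => X j ω)) μ →
      Integrable (fun ω => f (fun i => X i ω) * g (fun j => X j ω)) μ →
      ∫ ω, f (fun i => X i ω) * g (fun j => X j ω) ∂μ ≤
        (∫ ω, f (fun i => X i ω) ∂μ) * ∫ ω, g (fun j => X j ω) ∂μ


/-! ### Truncations -/

/-- The truncation of `y` to the interval `[-a, a]` (for `0 ≤ a`). -/
def clip (a y : ℝ) : ℝ := max (-a) (min y a)

/-- The centred truncation `clip a f - E (clip a f)` of a random variable `f`. -/
def tau {Ω : Type} [MeasurableSpace Ω] (μ : Measure Ω) (a : ℝ) (f : Ω → ℝ) (ω : Ω) : ℝ :=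
  clip a (f ω) - ∫ ω', clip a (f ω') ∂μ

/-- The length of the part of `[a, b]` lying below `y` (for `a ≤ b`). -/
def band (a b y : ℝ) : ℝ := min (max y a) b - a

lemma clip_mono (a : ℝ) : Monotone (clip a) := fun _ _ h =>
  max_le_max le_rfl (min_le_min h le_rfl)

lemma band_mono (a b : ℝ) : Monotone (band a b) := fun _ _ h =>
  sub_le_sub_right (min_le_min (max_le_max h le_rfl) le_rfl) _

lemma abs_clip_le {a : ℝ} (ha : 0 ≤ a) (y : ℝ) : |clip a y| ≤ a := by
  unfold clip; rw [abs_le]; constructor <;> grind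

lemma clip_sq_le {a : ℝ} (ha : 0 ≤ a) (y : ℝ) : clip a y ^ 2 ≤ y ^ 2 := by
  rw [sq_le_sq]; unfold clip; grind

lemma abs_sub_clip_le {a : ℝ} (ha : 0 < a) (y : ℝ) : |y - clip a y| ≤ y ^ 2 / a := by
  rw [le_div_iff₀ ha]
  have h : |y - clip a y| = 0 ∨ (|y - clip a y| ≤ |y| ∧ a ≤ |y|) := by
    unfold clip; grind
  rcases h with h | ⟨h1, h2⟩
  · rw [h]; nlinarith
  · rw [← sq_abs y]; nlinarith [abs_nonneg y]

lemma band_nonneg {a b : ℝ} (hab : a ≤ b) (y : ℝ) : 0 ≤ band a b y := by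
  unfold band; grind

lemma abs_band_le {a b : ℝ} (ha : 0 ≤ a) (hab : a ≤ b) (y : ℝ) : |band a b y| ≤ b := by
  unfold band; grind

lemma band_sq_le {a b : ℝ} (ha : 0 ≤ a) (hab : a ≤ b) (y : ℝ) : band a b y ^ 2 ≤ y ^ 2 := by
  rw [sq_le_sq]; unfold band; grind

lemma band_add_le {a b : ℝ} (ha : 0 < a) (hab : a ≤ b) (y : ℝ) :
    band a b y + band a b (-y) ≤ y ^ 2 / a := by
  rw [le_div_iff₀ ha]
  have h : band a b y + band a b (-y) = 0 ∨
      (band a b y + band a b (-y) ≤ |y| ∧ a ≤ |y|) := by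
    unfold band; grind
  rcases h with h | ⟨h1, h2⟩
  · rw [h]; nlinarith
  · rw [← sq_abs y]; nlinarith [abs_nonneg y]

lemma clip_sub_clip {a b : ℝ} (ha : 0 ≤ a) (hab : a ≤ b) (y : ℝ) :
    clip b y - clip a y = band a b y - band a b (-y) := by
  unfold clip band; grind

/-! ### Moments of sums of negatively associated variables -/

section NA

variable {Ω : Type} [MeasurableSpace Ω] {μ : Measure Ω} {ι : Type}

lemma NegAssocOn.comp_mono {Y : ι → Ω → ℝ} {S : Set ι} (h : NegAssocOn μ Y S)
    {φ : ι → ℝ → ℝ} (hφ : ∀ i, Monotone (φ i)) :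
    NegAssocOn μ (fun i ω => φ i (Y i ω)) S := by
  intro A B hA hB hAB f g hf hg h1 h2 h3
  exact h A B hA hB hAB (fun x => f fun i => φ i (x i)) (fun x => g fun i => φ i (x i))
    (fun x y hxy => hf fun i => hφ i (hxy i)) (fun x y hxy => hg fun i => hφ i (hxy i)) h1 h2 h3

lemma NegAssocOn.neg {Y : ι → Ω → ℝ} {S : Set ι} (h : NegAssocOn μ Y S) :
    NegAssocOn μ (fun i ω => -Y i ω) S := by
  intro A B hA hB hAB f g hf hg h1 h2 h3
  have := h A B hA hB hAB (fun x => -f fun i => -(x i)) (fun x => -g fun i => -(x i))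
    (fun x y hxy => neg_le_neg (hf fun i => neg_le_neg (hxy i)))
    (fun x y hxy => neg_le_neg (hg fun i => neg_le_neg (hxy i))) h1.neg h2.neg
    (by simpa only [neg_mul_neg] using h3)
  simpa only [neg_mul_neg, integral_neg] using this

lemma integrable_of_abs_le [IsProbabilityMeasure μ] {f : Ω → ℝ} (hf : Measurable f) {b : ℝ}
    (hb : ∀ ω, |f ω| ≤ b) : Integrable f μ :=
  Integrable.of_bound hf.aestronglyMeasurable b (ae_of_all _ hb)

/-- The Laplace transform of a sum of bounded negatively associated variables is at most the
product of the Laplace transforms. -/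
lemma integral_exp_sum_le [IsProbabilityMeasure μ] {X : ι → Ω → ℝ} {T : Finset ι}
    (hX : NegAssocOn μ X T) (hm : ∀ i ∈ T, Measurable (X i)) {b : ℝ}
    (hb : ∀ i ∈ T, ∀ ω, |X i ω| ≤ b) :
    ∫ ω, Real.exp (∑ i ∈ T, X i ω) ∂μ ≤ ∏ i ∈ T, ∫ ω, Real.exp (X i ω) ∂μ := by
  classical
  have hint : ∀ S ⊆ T, Integrable (fun ω => Real.exp (∑ i ∈ S, X i ω)) μ := by
    intro S hS
    refine integrable_of_abs_le (b := Real.exp (∑ i ∈ S, b))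
      (Real.measurable_exp.comp (Finset.measurable_fun_sum S fun i hi => hm i (hS hi))) ?_
    intro ω
    rw [Real.abs_exp, Real.exp_le_exp]
    exact Finset.sum_le_sum fun i hi => (le_abs_self _).trans (hb i (hS hi) ω)
  suffices H : ∀ S ⊆ T,
      ∫ ω, Real.exp (∑ i ∈ S, X i ω) ∂μ ≤ ∏ i ∈ S, ∫ ω, Real.exp (X i ω) ∂μ from
    H T subset_rfl
  intro S
  induction S using Finset.induction_on with
  | empty => intro _; simp
  | insert i S hi ih =>
    intro hS
    have hiT : i ∈ T := hS (Finset.mem_insert_self _ _)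
    have hST : S ⊆ T := (Finset.subset_insert _ _).trans hS
    have hi1 : Integrable (fun ω => Real.exp (X i ω)) μ := by
      simpa using hint {i} (by simpa using hiT)
    have e : ∀ ω, Real.exp (∑ j ∈ insert i S, X j ω)
        = Real.exp (X i ω) * Real.exp (∑ j ∈ S, X j ω) := fun ω => by
      rw [Finset.sum_insert hi, Real.exp_add]
    have key := hX {i} S (by simpa using hiT) (by exact_mod_cast hST) (by simpa using hi)
      (fun x => Real.exp (x ⟨i, by simp⟩)) (fun x => Real.exp (∑ j, x j))
      (fun x y h => Real.exp_le_exp.2 (h _))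
      (fun x y h => Real.exp_le_exp.2 (Finset.sum_le_sum fun j _ => h j))
    have e2 : ∀ ω, ∑ j : S, X j ω = ∑ j ∈ S, X j ω := fun ω =>
      Finset.sum_coe_sort S fun j => X j ω
    simp only [e2] at key
    have key := key hi1 (hint S hST) (by simpa only [e] using hint _ hS)
    simp only [e]
    rw [Finset.prod_insert hi]
    exact key.trans (mul_le_mul_of_nonneg_left (ih hST)
      (integral_nonneg fun ω => (Real.exp_pos _).le))

/-- Exponential moment bound at parameter `1 / (2 √G)` for a sum of centred non-decreasing
transforms bounded by `√G`. The opposite sign follows by replacing `Y` with `-Y`. -/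
lemma integral_exp_centered_le [IsProbabilityMeasure μ] {Y : ι → Ω → ℝ} {T : Finset ι}
    (hY : NegAssocOn μ Y T) (hm : ∀ i ∈ T, Measurable (Y i))
    (hi2 : ∀ i ∈ T, Integrable (fun ω => (Y i ω) ^ 2) μ)
    {G : ℝ} (hG : 0 < G) (hsum : ∑ i ∈ T, ∫ ω, (Y i ω) ^ 2 ∂μ ≤ G)
    {φ : ℝ → ℝ} (hφ : Monotone φ) (hb : ∀ y, |φ y| ≤ √G) (hsq : ∀ y, φ y ^ 2 ≤ y ^ 2) :
    ∫ ω, Real.exp ((∑ i ∈ T, (φ (Y i ω) - ∫ ω', φ (Y i ω') ∂μ)) / (2 * √G)) ∂μ ≤ 2 := by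
  have hs : 0 < √G := Real.sqrt_pos.2 hG
  set m : ι → ℝ := fun i => ∫ ω', φ (Y i ω') ∂μ with hmdef
  have hmb : ∀ i, |m i| ≤ √G := fun i => by
    have := norm_integral_le_of_norm_le_const (μ := μ) (f := fun ω' => φ (Y i ω'))
      (ae_of_all _ fun ω => hb (Y i ω))
    simpa using this
  set X : ι → Ω → ℝ := fun i ω => (φ (Y i ω) - m i) / (2 * √G) with hXdef
  have hXNA : NegAssocOn μ X T := hY.comp_mono (φ := fun i y => (φ y - m i) / (2 * √G))
    fun i x y h => by
      have := hφ h
      dsimp only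
      gcongr
  have hφm : ∀ i ∈ T, Measurable fun ω => φ (Y i ω) := fun i hi => hφ.measurable.comp (hm i hi)
  have hXm : ∀ i ∈ T, Measurable (X i) := fun i hi => ((hφm i hi).sub_const _).div_const _
  have hXb : ∀ i ∈ T, ∀ ω, |X i ω| ≤ 1 := fun i _ ω => by
    simp only [hXdef]
    rw [abs_div, abs_of_pos (by positivity : 0 < 2 * √G), div_le_one (by positivity)]
    calc _ ≤ |φ (Y i ω)| + |m i| := abs_sub _ _
      _ ≤ _ := by linarith [hb (Y i ω), hmb i]
  have h1 := integral_exp_sum_le hXNA hXm hXb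
  have e : ∀ ω, (∑ i ∈ T, (φ (Y i ω) - m i)) / (2 * √G) = ∑ i ∈ T, X i ω := fun ω => by
    rw [Finset.sum_div]
  rw [integral_congr_ae (ae_of_all μ fun ω => congrArg Real.exp (e ω))]
  have h2 : ∀ i ∈ T, ∫ ω, Real.exp (X i ω) ∂μ ≤ Real.exp ((∫ ω, (Y i ω) ^ 2 ∂μ) / (4 * G)) := by
    intro i hi
    have hφi : Integrable (fun ω => φ (Y i ω)) μ := integrable_of_abs_le (hφm i hi) fun ω => hb _
    have hφ2 : Integrable (fun ω => φ (Y i ω) ^ 2) μ :=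
      integrable_of_abs_le (b := √G ^ 2) ((hφm i hi).pow_const 2) fun ω => by
        rw [abs_pow]; exact pow_le_pow_left₀ (abs_nonneg _) (hb _) 2
    have hG4 : (2 * √G) ^ 2 = 4 * G := by rw [mul_pow, Real.sq_sqrt hG.le]; norm_num
    have hle : ∀ ω, Real.exp (X i ω) ≤
        1 + (φ (Y i ω) - m i) / (2 * √G)
          + (φ (Y i ω) ^ 2 - 2 * m i * φ (Y i ω) + m i ^ 2) / (4 * G) := fun ω => by
      have := (abs_le.1 (Real.abs_exp_sub_one_sub_id_le (hXb i hi ω))).2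
      have e3 : X i ω ^ 2 = (φ (Y i ω) ^ 2 - 2 * m i * φ (Y i ω) + m i ^ 2) / (4 * G) := by
        simp only [hXdef]; rw [div_pow, hG4]; ring
      rw [e3] at this
      have e4 : X i ω = (φ (Y i ω) - m i) / (2 * √G) := rfl
      linarith
    have hA : Integrable (fun ω => (φ (Y i ω) - m i) / (2 * √G)) μ :=
      (hφi.sub (integrable_const _)).div_const _
    have hB1 : Integrable (fun ω => φ (Y i ω) ^ 2 - 2 * m i * φ (Y i ω)) μ :=
      hφ2.sub (hφi.const_mul _)
    have hB : Integrable (fun ω =>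
        (φ (Y i ω) ^ 2 - 2 * m i * φ (Y i ω) + m i ^ 2) / (4 * G)) μ :=
      (hB1.add (integrable_const _)).div_const _
    have hA1 : Integrable (fun ω => 1 + (φ (Y i ω) - m i) / (2 * √G)) μ :=
      (integrable_const _).add hA
    have hexp : Integrable (fun ω => Real.exp (X i ω)) μ :=
      integrable_of_abs_le (b := Real.exp 1) (Real.measurable_exp.comp (hXm i hi)) fun ω => by
        rw [Real.abs_exp, Real.exp_le_exp]; exact (le_abs_self _).trans (hXb i hi ω)
    have hI := integral_mono hexp (hA1.add hB) hle
    have hval : ∫ ω, (1 + (φ (Y i ω) - m i) / (2 * √G) +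
        (φ (Y i ω) ^ 2 - 2 * m i * φ (Y i ω) + m i ^ 2) / (4 * G)) ∂μ
        = 1 + ((∫ ω, φ (Y i ω) ^ 2 ∂μ) - m i ^ 2) / (4 * G) := by
      rw [integral_add hA1 hB, integral_add (integrable_const _) hA, integral_div, integral_div,
        integral_sub hφi (integrable_const _), integral_add hB1 (integrable_const _),
        integral_sub hφ2 (hφi.const_mul _), integral_const_mul]
      have : ∫ ω, φ (Y i ω) ∂μ = m i := rfl
      rw [this]
      simp
      ring
    refine (hI.trans_eq hval).trans ?_
    refine le_trans ?_ (Real.add_one_le_exp _)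
    have h5 : ∫ ω, φ (Y i ω) ^ 2 ∂μ ≤ ∫ ω, (Y i ω) ^ 2 ∂μ :=
      integral_mono hφ2 (hi2 i hi) fun ω => hsq _
    have : ((∫ ω, φ (Y i ω) ^ 2 ∂μ) - m i ^ 2) / (4 * G) ≤ (∫ ω, (Y i ω) ^ 2 ∂μ) / (4 * G) := by
      gcongr
      nlinarith [sq_nonneg (m i)]
    linarith
  calc _ ≤ _ := h1
    _ ≤ ∏ i ∈ T, Real.exp ((∫ ω, (Y i ω) ^ 2 ∂μ) / (4 * G)) :=
        Finset.prod_le_prod (fun i _ => integral_nonneg fun ω => (Real.exp_pos _).le) h2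
    _ = Real.exp ((∑ i ∈ T, ∫ ω, (Y i ω) ^ 2 ∂μ) / (4 * G)) := by
        rw [← Real.exp_sum, Finset.sum_div]
    _ ≤ Real.exp (1 / 4) := by
        apply Real.exp_le_exp.2
        rw [div_le_div_iff₀ (by positivity) (by norm_num)]
        linarith
    _ ≤ 2 := by
        have := Real.exp_bound_div_one_sub_of_interval (x := 1 / 4) (by norm_num) (by norm_num)
        refine this.trans (by norm_num)

lemma pow_four_le_exp (x : ℝ) : x ^ 4 ≤ 24 * (Real.exp x + Real.exp (-x)) := by
  have h := Real.pow_div_factorial_le_exp (|x|) (abs_nonneg x) 4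
  have h4 : |x| ^ 4 = x ^ 4 := by
    rw [show (4 : ℕ) = 2 * 2 from rfl, pow_mul, sq_abs, pow_mul]
  have hf : ((Nat.factorial 4 : ℕ) : ℝ) = 24 := by norm_num [Nat.factorial]
  rw [h4, hf] at h
  have h2 : Real.exp |x| ≤ Real.exp x + Real.exp (-x) := by
    rcases abs_cases x with ⟨h, _⟩ | ⟨h, _⟩ <;> rw [h] <;>
      linarith [Real.exp_pos x, Real.exp_pos (-x)]
  linarith [(div_le_iff₀ (by norm_num : (0 : ℝ) < 24)).1 h]

/-- Fourth moment bound: a sum of centred, bounded, non-decreasing transforms at scale `√G` of a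
negatively associated family with total second moment at most `G` has fourth moment `O(G ^ 2)`. -/
lemma fourth_moment_le [IsProbabilityMeasure μ] {Y : ι → Ω → ℝ} {T : Finset ι}
    (hY : NegAssocOn μ Y T) (hm : ∀ i ∈ T, Measurable (Y i))
    (hi2 : ∀ i ∈ T, Integrable (fun ω => (Y i ω) ^ 2) μ)
    {G : ℝ} (hG : 0 < G) (hsum : ∑ i ∈ T, ∫ ω, (Y i ω) ^ 2 ∂μ ≤ G)
    {φ : ℝ → ℝ} (hφ : Monotone φ) (hb : ∀ y, |φ y| ≤ √G) (hsq : ∀ y, φ y ^ 2 ≤ y ^ 2) :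
    Integrable (fun ω => (∑ i ∈ T, (φ (Y i ω) - ∫ ω', φ (Y i ω') ∂μ)) ^ 4) μ ∧
    ∫ ω, (∑ i ∈ T, (φ (Y i ω) - ∫ ω', φ (Y i ω') ∂μ)) ^ 4 ∂μ ≤ 1536 * G ^ 2 := by
  have hs : 0 < √G := Real.sqrt_pos.2 hG
  have h1 := integral_exp_centered_le hY hm hi2 hG hsum hφ hb hsq
  have h2 := integral_exp_centered_le (φ := fun y => -φ (-y)) hY.neg
    (fun i hi => (hm i hi).neg) (by simpa using hi2) hG (by simpa using hsum)
    (fun x y h => neg_le_neg (hφ (neg_le_neg h))) (by simpa using fun y => hb (-y))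
    (fun y => by simpa using hsq (-y))
  set Z : Ω → ℝ := fun ω => ∑ i ∈ T, (φ (Y i ω) - ∫ ω', φ (Y i ω') ∂μ) with hZ
  have hZm : Measurable Z := Finset.measurable_fun_sum T fun i hi =>
    (hφ.measurable.comp (hm i hi)).sub_const _
  obtain ⟨b, hZb⟩ : ∃ b, ∀ ω, |Z ω| ≤ b := by
    refine ⟨∑ i ∈ T, (√G + |∫ ω', φ (Y i ω') ∂μ|), fun ω => ?_⟩
    refine (Finset.abs_sum_le_sum_abs _ _).trans (Finset.sum_le_sum fun i _ => ?_)
    exact (abs_sub _ _).trans (by gcongr; exact hb _)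
  have e2 : ∀ ω, (∑ i ∈ T, (-φ (- -Y i ω) - ∫ ω', -φ (- -Y i ω') ∂μ)) / (2 * √G)
      = -(Z ω / (2 * √G)) := fun ω => by
    simp only [neg_neg, integral_neg, hZ, ← neg_div, ← Finset.sum_neg_distrib]
    congr 1
    exact Finset.sum_congr rfl fun i _ => by ring
  simp only [e2] at h2
  have hint4 : Integrable (fun ω => Z ω ^ 4) μ :=
    integrable_of_abs_le (b := b ^ 4) (hZm.pow_const 4) fun ω => by
      rw [abs_pow]; exact pow_le_pow_left₀ (abs_nonneg _) (hZb ω) 4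
  refine ⟨hint4, ?_⟩
  have hbd : ∀ ω, |Z ω / (2 * √G)| ≤ b / (2 * √G) := fun ω => by
    rw [abs_div, abs_of_pos (by positivity : 0 < 2 * √G)]
    have := hZb ω
    gcongr
  have i1 : Integrable (fun ω => Real.exp (Z ω / (2 * √G))) μ :=
    integrable_of_abs_le (b := Real.exp (b / (2 * √G)))
      (Real.measurable_exp.comp (hZm.div_const _)) fun ω => by
        rw [Real.abs_exp, Real.exp_le_exp]; exact (le_abs_self _).trans (hbd ω)
  have i2 : Integrable (fun ω => Real.exp (-(Z ω / (2 * √G)))) μ :=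
    integrable_of_abs_le (b := Real.exp (b / (2 * √G)))
      (Real.measurable_exp.comp (hZm.div_const _).neg) fun ω => by
        rw [Real.abs_exp, Real.exp_le_exp]; exact (neg_le_abs _).trans (hbd ω)
  have hG16 : (2 * √G) ^ 4 = 16 * G ^ 2 := by
    rw [mul_pow, show √G ^ 4 = (√G ^ 2) ^ 2 by ring, Real.sq_sqrt hG.le]; norm_num
  have hle : ∀ ω, Z ω ^ 4 ≤ (16 * G ^ 2 * 24) *
      (Real.exp (Z ω / (2 * √G)) + Real.exp (-(Z ω / (2 * √G)))) := fun ω => by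
    have := pow_four_le_exp (Z ω / (2 * √G))
    rw [div_pow, hG16, div_le_iff₀ (by positivity)] at this
    linarith
  calc _ ≤ _ := integral_mono hint4 ((i1.add i2).const_mul _) hle
    _ = (16 * G ^ 2 * 24) * ((∫ ω, Real.exp (Z ω / (2 * √G)) ∂μ)
          + ∫ ω, Real.exp (-(Z ω / (2 * √G))) ∂μ) := by
        simp only [Pi.add_apply]
        rw [integral_const_mul, integral_add i1 i2]
    _ ≤ (16 * G ^ 2 * 24) * (2 + 2) := by gcongr
    _ = _ := by ring

/-- Cost of lowering the truncation level from `√G` to `√(G / 2)`, uniformly over all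
subfamilies. -/
lemma level_change [IsProbabilityMeasure μ] {Y : ι → Ω → ℝ} {T : Finset ι}
    (hY : NegAssocOn μ Y T) (hm : ∀ i ∈ T, Measurable (Y i))
    (hi2 : ∀ i ∈ T, Integrable (fun ω => (Y i ω) ^ 2) μ)
    {G : ℝ} (hG : 0 < G) (hsum : ∑ i ∈ T, ∫ ω, (Y i ω) ^ 2 ∂μ ≤ G) :
    ∃ W : Ω → ℝ, Integrable W μ ∧ ∫ ω, W ω ∂μ ≤ 84672 * G ^ 2 ∧ ∀ S ⊆ T, ∀ ω,
      (∑ i ∈ S, (tau μ (√G) (Y i) ω - tau μ (√(G / 2)) (Y i) ω)) ^ 4 ≤ W ω := by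
  set b := √G with hbdef
  set a := √(G / 2) with hadef
  have ha : 0 < a := Real.sqrt_pos.2 (by positivity)
  have hb : 0 < b := Real.sqrt_pos.2 hG
  have hab : a ≤ b := Real.sqrt_le_sqrt (by linarith)
  have ha2 : a ^ 2 = G / 2 := Real.sq_sqrt (by positivity)
  have hb2 : b ^ 2 = G := Real.sq_sqrt hG.le
  obtain ⟨p1, p2⟩ := fourth_moment_le hY hm hi2 hG hsum (band_mono a b)
    (abs_band_le ha.le hab) (band_sq_le ha.le hab)
  obtain ⟨q1, q2⟩ := fourth_moment_le hY.neg (fun i hi => (hm i hi).neg) (by simpa using hi2)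
    hG (by simpa using hsum) (band_mono a b) (abs_band_le ha.le hab) (band_sq_le ha.le hab)
  set P : Ω → ℝ := fun ω => ∑ i ∈ T, (band a b (Y i ω) - ∫ ω', band a b (Y i ω') ∂μ) with hP
  set Q : Ω → ℝ := fun ω => ∑ i ∈ T, (band a b (-Y i ω) - ∫ ω', band a b (-Y i ω') ∂μ) with hQ
  have ip : ∀ i ∈ T, Integrable (fun ω => band a b (Y i ω)) μ := fun i hi =>
    integrable_of_abs_le ((band_mono a b).measurable.comp (hm i hi))
      fun ω => abs_band_le ha.le hab _
  have iq : ∀ i ∈ T, Integrable (fun ω => band a b (-Y i ω)) μ := fun i hi =>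
    integrable_of_abs_le ((band_mono a b).measurable.comp (hm i hi).neg)
      fun ω => abs_band_le ha.le hab _
  have ic : ∀ c, 0 ≤ c → ∀ i ∈ T, Integrable (fun ω => clip c (Y i ω)) μ := fun c hc i hi =>
    integrable_of_abs_le ((clip_mono c).measurable.comp (hm i hi)) fun ω => abs_clip_le hc _
  set z : ℝ := ∑ i ∈ T, ((∫ ω, band a b (Y i ω) ∂μ) + ∫ ω, band a b (-Y i ω) ∂μ) with hz
  have hz0 : 0 ≤ z := Finset.sum_nonneg fun i _ => add_nonneg
    (integral_nonneg fun ω => band_nonneg hab _) (integral_nonneg fun ω => band_nonneg hab _)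
  have hz1 : z * a ≤ G := by
    rw [hz, Finset.sum_mul]
    refine le_trans (Finset.sum_le_sum fun i hi => ?_) hsum
    rw [← le_div_iff₀ ha, ← integral_div, ← integral_add (ip i hi) (iq i hi)]
    exact integral_mono ((ip i hi).add (iq i hi)) ((hi2 i hi).div_const _)
      fun ω => band_add_le ha hab _
  have hz4 : z ^ 4 ≤ 4 * G ^ 2 := by
    have h1 : (z * a) ^ 2 ≤ G ^ 2 := pow_le_pow_left₀ (by positivity) hz1 2
    rw [mul_pow, ha2] at h1
    have h2 : z ^ 2 ≤ 2 * G := by nlinarith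
    calc z ^ 4 = (z ^ 2) ^ 2 := by ring
      _ ≤ (2 * G) ^ 2 := pow_le_pow_left₀ (by positivity) h2 2
      _ = _ := by ring
  have hpq : Integrable (fun ω => P ω ^ 4 + Q ω ^ 4) μ := p1.add q1
  refine ⟨fun ω => 27 * ((P ω ^ 4 + Q ω ^ 4) + 16 * (4 * G ^ 2)),
    (hpq.add (integrable_const _)).const_mul 27, ?_, ?_⟩
  · rw [integral_const_mul, integral_add hpq (integrable_const _), integral_add p1 q1]
    simp only [integral_const, probReal_univ, one_smul]
    linarith
  · intro S hS ω
    have h1 : |∑ i ∈ S, (tau μ b (Y i) ω - tau μ a (Y i) ω)| ≤ P ω + Q ω + 2 * z := by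
      refine (Finset.abs_sum_le_sum_abs _ _).trans ?_
      refine (Finset.sum_le_sum_of_subset_of_nonneg hS fun i _ _ => abs_nonneg _).trans ?_
      rw [hP, hQ, hz, Finset.mul_sum]
      simp only [← Finset.sum_add_distrib]
      refine Finset.sum_le_sum fun i hi => ?_
      have e : tau μ b (Y i) ω - tau μ a (Y i) ω
          = (band a b (Y i ω) - band a b (-Y i ω))
            - ((∫ ω', band a b (Y i ω') ∂μ) - ∫ ω', band a b (-Y i ω') ∂μ) := by
        rw [← integral_sub (ip i hi) (iq i hi), ← clip_sub_clip ha.le hab]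
        simp only [← clip_sub_clip ha.le hab]
        rw [integral_sub (ic b hb.le i hi) (ic a ha.le i hi)]
        unfold tau; ring
      have n1 := band_nonneg hab (Y i ω)
      have n2 := band_nonneg hab (-Y i ω)
      have n3 : 0 ≤ ∫ ω', band a b (Y i ω') ∂μ := integral_nonneg fun ω => band_nonneg hab _
      have n4 : 0 ≤ ∫ ω', band a b (-Y i ω') ∂μ := integral_nonneg fun ω => band_nonneg hab _
      rw [e, abs_le]
      constructor <;> linarith
    have h0 := abs_nonneg (∑ i ∈ S, (tau μ b (Y i) ω - tau μ a (Y i) ω))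
    have h2 := pow_le_pow_left₀ h0 h1 4
    rw [Even.pow_abs (by decide)] at h2
    refine h2.trans ?_
    have h3 : ∀ x y w : ℝ, (x + y + w) ^ 4 ≤ 27 * ((x ^ 4 + y ^ 4) + w ^ 4) := by
      intro x y w
      have s1 : (x + y + w) ^ 2 ≤ 3 * (x ^ 2 + y ^ 2 + w ^ 2) := by
        nlinarith [sq_nonneg (x - y), sq_nonneg (y - w), sq_nonneg (x - w)]
      have s2 := pow_le_pow_left₀ (sq_nonneg _) s1 2
      nlinarith [sq_nonneg (x^2 - y^2), sq_nonneg (y^2 - w^2), sq_nonneg (x^2 - w^2)]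
    refine (h3 _ _ _).trans ?_
    have : (2 * z) ^ 4 = 16 * z ^ 4 := by ring
    linarith

/-! ### Maxima over a family of index sets -/

open Classical in
/-- The members of the finite set `S` that lie in `A`. -/
def restr (S : Finset ι) (A : Set ι) : Finset ι := S.filter fun i => i ∈ A

lemma mem_restr {S : Finset ι} {A : Set ι} {i : ι} : i ∈ restr S A ↔ i ∈ S ∧ i ∈ A := by
  simp [restr]

lemma restr_subset (S : Finset ι) (A : Set ι) : restr S A ⊆ S := fun _ h => (mem_restr.1 h).1

/-- `MaxBound μ Y T K 𝓐`: for each subfamily `S` of `T` and each `G > 0` dominating the total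
second moment of `S`, the sums over `S ∩ A`, `A ∈ 𝓐`, of the variables truncated at `√G` and
centred have fourth powers with a common integrable majorant `N` of mean at most `K * G ^ 2`. -/
def MaxBound (μ : Measure Ω) (Y : ι → Ω → ℝ) (T : Finset ι) (K : ℝ) (𝓐 : Set (Set ι)) : Prop :=
  ∀ S ⊆ T, ∀ G : ℝ, 0 < G → ∑ i ∈ S, ∫ ω, (Y i ω) ^ 2 ∂μ ≤ G →
    ∃ N : Ω → ℝ, Integrable N μ ∧ ∫ ω, N ω ∂μ ≤ K * G ^ 2 ∧ (∀ ω, 0 ≤ N ω) ∧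
      ∀ A ∈ 𝓐, ∀ ω, (∑ i ∈ restr S A, tau μ (√G) (Y i) ω) ^ 4 ≤ N ω

lemma NegAssocOn.subset {Y : ι → Ω → ℝ} {S T : Set ι} (h : NegAssocOn μ Y T) (hST : S ⊆ T) :
    NegAssocOn μ Y S := fun A B hA hB => h A B (hA.trans hST) (hB.trans hST)

lemma maxBound_univ [IsProbabilityMeasure μ] {Y : ι → Ω → ℝ} {T : Finset ι}
    (hY : NegAssocOn μ Y T) (hm : ∀ i ∈ T, Measurable (Y i))
    (hi2 : ∀ i ∈ T, Integrable (fun ω => (Y i ω) ^ 2) μ) :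
    MaxBound μ Y T 1536 {Set.univ} := by
  intro S hS G hG hsum
  obtain ⟨h1, h2⟩ := fourth_moment_le (hY.subset (by exact_mod_cast hS)) (fun i hi => hm i (hS hi))
    (fun i hi => hi2 i (hS hi)) hG hsum (clip_mono (√G)) (abs_clip_le (Real.sqrt_nonneg G))
    (clip_sq_le (Real.sqrt_nonneg G))
  refine ⟨_, h1, h2, fun ω => by positivity, ?_⟩
  rintro A rfl ω
  have e : restr S Set.univ = S := by ext i; simp [mem_restr]
  rw [e]
  rfl

lemma add_pow_four_le (x y : ℝ) : (x + y) ^ 4 ≤ 3 / 2 * x ^ 4 + 28561 * y ^ 4 := by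
  have h : |x + y| ≤ |x| + |y| := abs_add_le x y
  have h4 := pow_le_pow_left₀ (abs_nonneg _) h 4
  have e : Even 4 := by decide
  rw [e.pow_abs] at h4
  rw [← e.pow_abs x, ← e.pow_abs y]
  refine h4.trans ?_
  have hx := abs_nonneg x
  have hy := abs_nonneg y
  -- `(13 / 12) ^ 4 < 3 / 2` and `13 ^ 4 = 28561`
  rcases le_total (12 * |y|) |x| with hc | hc
  · have : |x| + |y| ≤ 13 / 12 * |x| := by linarith
    have := pow_le_pow_left₀ (by positivity) this 4
    rw [mul_pow] at this
    nlinarith [pow_nonneg hx 4, pow_nonneg hy 4]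
  · have : |x| + |y| ≤ 13 * |y| := by linarith
    have := pow_le_pow_left₀ (by positivity) this 4
    rw [mul_pow] at this
    nlinarith [pow_nonneg hx 4, pow_nonneg hy 4]

/-- A median: a point splitting a finite weighted family, sorted by `c`, into two halves. -/
lemma exists_median {S : Finset ι} (hS : S.Nonempty) (c : ι → ℕ) {w : ι → ℝ}
    (hw : ∀ i, 0 ≤ w i) :
    ∃ i₀ ∈ S, ∑ i ∈ S with c i < c i₀, w i ≤ (∑ i ∈ S, w i) / 2 ∧
      ∑ i ∈ S with c i₀ < c i, w i ≤ (∑ i ∈ S, w i) / 2 := by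
  classical
  set H := ∑ i ∈ S, w i with hH
  have hH0 : 0 ≤ H := Finset.sum_nonneg fun i _ => hw i
  obtain ⟨j, hj, hjm⟩ := S.exists_max_image c hS
  have hne : (S.filter fun i₀ => H / 2 ≤ ∑ i ∈ S with c i ≤ c i₀, w i).Nonempty := by
    refine ⟨j, Finset.mem_filter.2 ⟨hj, ?_⟩⟩
    rw [Finset.filter_true_of_mem fun i hi => hjm i hi]
    linarith
  obtain ⟨i₀, hi₀, hmin⟩ := Finset.exists_min_image _ c hne
  rw [Finset.mem_filter] at hi₀
  refine ⟨i₀, hi₀.1, ?_, ?_⟩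
  · by_contra! hlt
    have hne2 : (S.filter fun i => c i < c i₀).Nonempty := by
      by_contra hemp
      rw [Finset.not_nonempty_iff_eq_empty] at hemp
      rw [hemp] at hlt
      simp at hlt
      linarith
    obtain ⟨i₁, hi₁, hmax⟩ := Finset.exists_max_image _ c hne2
    rw [Finset.mem_filter] at hi₁
    have := hmin i₁ (Finset.mem_filter.2 ⟨hi₁.1, hlt.le.trans
      (Finset.sum_le_sum_of_subset_of_nonneg (fun i hi =>
        Finset.mem_filter.2 ⟨(Finset.mem_filter.1 hi).1, hmax i hi⟩) fun i _ _ => hw i)⟩)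
    exact absurd hi₁.2 (not_lt.2 this)
  · have := Finset.sum_filter_add_sum_filter_not S (fun i => c i ≤ c i₀) w
    simp only [not_le] at this
    linarith [hi₀.2]

/-- Adding one coordinate: if the sums over the sets of `𝓐` are controlled, so are the sums over
the sets `A ∩ {c ≤ k}`. The constant depends only on the previous one. -/
lemma MaxBound.step [IsProbabilityMeasure μ] {Y : ι → Ω → ℝ} {T : Finset ι}
    (hY : NegAssocOn μ Y T) (hm : ∀ i ∈ T, Measurable (Y i))
    (hi2 : ∀ i ∈ T, Integrable (fun ω => (Y i ω) ^ 2) μ) {K : ℝ} (hK : 0 ≤ K)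
    {𝓐 : Set (Set ι)} (h : MaxBound μ Y T K 𝓐) (c : ι → ℕ) :
    MaxBound μ Y T (1000000 * (K + 84672)) {B | ∃ A ∈ 𝓐, ∃ k : ℕ, B = A ∩ {i | c i ≤ k}} := by
  classical
  intro S
  induction S using Finset.strongInduction with
  | H S ih =>
  intro hST G hG hsum
  rcases S.eq_empty_or_nonempty with rfl | hne
  · exact ⟨fun _ => 0, integrable_zero _ _ _, by simp; positivity, by simp, by simp [restr]⟩
  have hw : ∀ i, 0 ≤ ∫ ω, (Y i ω) ^ 2 ∂μ := fun i => integral_nonneg fun ω => sq_nonneg _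
  obtain ⟨i₀, hi₀, hl, hr⟩ := exists_median hne c hw
  set Sl := S.filter fun i => c i < c i₀ with hSl
  set Sr := S.filter fun i => c i₀ < c i with hSr
  set Sm := S.filter fun i => c i ≤ c i₀ with hSm
  have hlS : Sl ⊆ S := Finset.filter_subset _ _
  have hrS : Sr ⊆ S := Finset.filter_subset _ _
  have hmS : Sm ⊆ S := Finset.filter_subset _ _
  obtain ⟨Nl, l1, l2, l3, l4⟩ := ih Sl
    (Finset.filter_ssubset.2 ⟨i₀, hi₀, lt_irrefl _⟩) (hlS.trans hST) (G / 2) (by positivity)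
    (by linarith)
  obtain ⟨Nr, r1, r2, r3, r4⟩ := ih Sr
    (Finset.filter_ssubset.2 ⟨i₀, hi₀, lt_irrefl _⟩) (hrS.trans hST) (G / 2) (by positivity)
    (by linarith)
  obtain ⟨Nm, m1, m2, m3, m4⟩ := h Sm (hmS.trans hST) G hG
    ((Finset.sum_le_sum_of_subset_of_nonneg hmS fun i _ _ => hw i).trans hsum)
  obtain ⟨W, w1, w2, w4⟩ := level_change (hY.subset (by exact_mod_cast hST))
    (fun i hi => hm i (hST hi)) (fun i hi => hi2 i (hST hi)) hG hsum
  have w3 : ∀ ω, 0 ≤ W ω := fun ω => by simpa using w4 ∅ (by simp) ω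
  have hlr : Integrable (fun ω => Nl ω + Nr ω) μ := l1.add r1
  have hmw : Integrable (fun ω => Nm ω + W ω) μ := m1.add w1
  refine ⟨fun ω => 3 / 2 * (Nl ω + Nr ω) + 8 * 28561 * (Nm ω + W ω),
    (hlr.const_mul _).add (hmw.const_mul _), ?_, ?_, ?_⟩
  · rw [integral_add (hlr.const_mul _) (hmw.const_mul _), integral_const_mul,
      integral_const_mul, integral_add l1 r1, integral_add m1 w1]
    have : 0 ≤ K * G ^ 2 := by positivity
    nlinarith
  · intro ω
    have := l3 ω; have := r3 ω; have := m3 ω; have := w3 ω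
    positivity
  · rintro _ ⟨A, hA, k, rfl⟩ ω
    have b1 := l3 ω
    have b2 := r3 ω
    have b3 := m3 ω
    have b4 := w3 ω
    -- passing from the truncation level `√(G / 2)` to `√G` on a subfamily
    have hsplit : ∀ R : Finset ι, ∑ i ∈ R, tau μ (√G) (Y i) ω = ∑ i ∈ R, tau μ (√(G / 2)) (Y i) ω
        + ∑ i ∈ R, (tau μ (√G) (Y i) ω - tau μ (√(G / 2)) (Y i) ω) := fun R => by
      rw [← Finset.sum_add_distrib]
      exact Finset.sum_congr rfl fun i _ => by ring
    rcases lt_trichotomy k (c i₀) with hk | hk | hk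
    · have e : restr S (A ∩ {i | c i ≤ k})
          = restr Sl (A ∩ {i | c i ≤ k}) := by
        ext i; simp [mem_restr, hSl]; grind
      rw [e, hsplit]
      have q1 := l4 _ ⟨A, hA, k, rfl⟩ ω
      have q2 := w4 (restr Sl (A ∩ {i | c i ≤ k}))
        ((restr_subset _ _).trans hlS) ω
      refine (add_pow_four_le _ _).trans ?_
      linarith
    · have e : restr S (A ∩ {i | c i ≤ k}) = restr Sm A := by
        ext i; simp [mem_restr, hSm]; grind
      rw [e]
      have := m4 A hA ω
      linarith
    · have e : ∑ i ∈ restr S (A ∩ {i | c i ≤ k}), tau μ (√G) (Y i) ω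
          = ∑ i ∈ restr Sm A, tau μ (√G) (Y i) ω
            + ∑ i ∈ restr Sr (A ∩ {i | c i ≤ k}), tau μ (√G) (Y i) ω := by
        rw [← Finset.sum_union]
        · congr 1
          ext i; simp [mem_restr, hSm, hSr]; grind
        · rw [Finset.disjoint_left]
          intro i; simp [mem_restr, hSm, hSr]; grind
      rw [e, hsplit (restr Sr _)]
      have q1 := r4 _ ⟨A, hA, k, rfl⟩ ω
      have q2 := w4 (restr Sr (A ∩ {i | c i ≤ k}))
        ((restr_subset _ _).trans hrS) ω
      have q3 := m4 A hA ω
      set x := ∑ i ∈ restr Sr (A ∩ {i | c i ≤ k}), tau μ (√(G / 2)) (Y i) ω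
      set y := ∑ i ∈ restr Sr (A ∩ {i | c i ≤ k}),
        (tau μ (√G) (Y i) ω - tau μ (√(G / 2)) (Y i) ω)
      set v := ∑ i ∈ restr Sm A, tau μ (√G) (Y i) ω
      have q4 : (v + y) ^ 4 ≤ 8 * (v ^ 4 + y ^ 4) := by
        have s1 : (v + y) ^ 2 ≤ 2 * (v ^ 2 + y ^ 2) := by nlinarith [sq_nonneg (v - y)]
        have s2 := pow_le_pow_left₀ (sq_nonneg _) s1 2
        nlinarith [sq_nonneg (v ^ 2 - y ^ 2)]
      have q5 := add_pow_four_le x (v + y)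
      have : v + (x + y) = x + (v + y) := by ring
      rw [this]
      linarith

end NA

/-! ### Rectangles -/

/-- The constant obtained for sums over rectangles restricted in `j` coordinates. -/
def Kconst : ℕ → ℝ
  | 0 => 1536
  | j + 1 => 1000000 * (Kconst j + 84672)

lemma Kconst_nonneg (j : ℕ) : 0 ≤ Kconst j := by
  induction j with
  | zero => norm_num [Kconst]
  | succ j ih => rw [Kconst]; positivity

lemma MaxBound.mono {Ω : Type} [MeasurableSpace Ω] {μ : Measure Ω} {ι : Type}
    {Y : ι → Ω → ℝ} {T : Finset ι} {K : ℝ} {𝓐 𝓑 : Set (Set ι)} (h : MaxBound μ Y T K 𝓐)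
    (hsub : 𝓑 ⊆ 𝓐) : MaxBound μ Y T K 𝓑 := fun S hS G hG hs =>
  let ⟨N, h1, h2, h3, h4⟩ := h S hS G hG hs
  ⟨N, h1, h2, h3, fun A hA => h4 A (hsub hA)⟩

lemma maxBound_rect {Ω : Type} [MeasurableSpace Ω] {μ : Measure Ω} [IsProbabilityMeasure μ]
    {d : ℕ} {Y : (Fin d → ℕ) → Ω → ℝ} {T : Finset (Fin d → ℕ)}
    (hY : NegAssocOn μ Y T) (hm : ∀ i ∈ T, Measurable (Y i))
    (hi2 : ∀ i ∈ T, Integrable (fun ω => (Y i ω) ^ 2) μ) (j : ℕ) (hj : j ≤ d) :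
    MaxBound μ Y T (Kconst j)
      {A | ∃ k : Fin d → ℕ, A = {i | ∀ a : Fin d, (a : ℕ) < j → i a ≤ k a}} := by
  induction j with
  | zero =>
    refine (maxBound_univ hY hm hi2).mono ?_
    rintro A ⟨k, rfl⟩
    simp
  | succ j ih =>
    refine ((ih (by omega)).step hY hm hi2 (Kconst_nonneg j)
      (fun i => i ⟨j, by omega⟩)).mono ?_
    rintro A ⟨k, rfl⟩
    refine ⟨_, ⟨k, rfl⟩, k ⟨j, by omega⟩, ?_⟩
    ext i
    simp only [Set.mem_ofPred_eq, Set.mem_inter_iff]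
    constructor
    · exact fun h => ⟨fun a ha => h a (by omega), h _ (by simp)⟩
    · rintro ⟨h1, h2⟩ a ha
      rcases Nat.lt_succ_iff_lt_or_eq.1 ha with h | h
      · exact h1 a h
      · subst h
        exact h2

/-- **First-moment bound for the maximum of partial sums** (Theorem 2.1).
There is a constant `C_d` depending only on `d` such that for every negatively associated
field `{Y_k : k ≤ n}` with mean zero and finite second moments,
`E M_n ≤ C_d (Σ_{k ≤ n} E Y_k²)^{1/2}`, where `M_n = max_{k ≤ n} |T_k|`. -/
theorem na_field_max_first_moment_inequality
    (d : ℕ) (hd : 1 ≤ d) :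
    ∃ C : ℝ, ∀ (Ω : Type) (_ : MeasurableSpace Ω) (μ : Measure Ω),
      IsProbabilityMeasure μ →
      ∀ (n : Fin d → ℕ) (Y : (Fin d → ℕ) → Ω → ℝ),
      (∀ k ∈ Finset.Icc (1 : Fin d → ℕ) n, Measurable (Y k)) →
      NegAssocOn μ Y (Set.Icc 1 n) →
      (∀ k ∈ Finset.Icc (1 : Fin d → ℕ) n, ∫ ω, Y k ω ∂μ = 0) →
      (∀ k ∈ Finset.Icc (1 : Fin d → ℕ) n, Integrable (fun ω => (Y k ω) ^ 2) μ) →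
      ∀ hn : ((Finset.Icc (1 : Fin d → ℕ) n).Nonempty),
      ∫ ω, (Finset.Icc (1 : Fin d → ℕ) n).sup' hn
          (fun k => |∑ i ∈ Finset.Icc (1 : Fin d → ℕ) k, Y i ω|) ∂μ ≤
        C * Real.sqrt (∑ k ∈ Finset.Icc (1 : Fin d → ℕ) n, ∫ ω, (Y k ω) ^ 2 ∂μ) := by
  refine ⟨3 + Kconst d, ?_⟩
  intro Ω _ μ _ n Y hm hY hmean hi2 hn
  set T := Finset.Icc (1 : Fin d → ℕ) n with hT
  set g := ∑ k ∈ T, ∫ ω, (Y k ω) ^ 2 ∂μ with hg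
  have hg0 : 0 ≤ g := Finset.sum_nonneg fun i _ => integral_nonneg fun ω => sq_nonneg _
  have hYT : NegAssocOn μ Y (T : Set (Fin d → ℕ)) := by
    rw [hT, Finset.coe_Icc]; exact hY
  -- Working with `G > g` avoids the degenerate case `g = 0`; then `G ↓ g`.
  have main : ∀ G, g < G → ∫ ω, T.sup' hn
      (fun k => |∑ i ∈ Finset.Icc (1 : Fin d → ℕ) k, Y i ω|) ∂μ ≤ (3 + Kconst d) * √G := by
    intro G hgG
    have hG : 0 < G := hg0.trans_lt hgG
    have hs : 0 < √G := Real.sqrt_pos.2 hG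
    obtain ⟨N, n1, n2, n3, n4⟩ := maxBound_rect hYT hm hi2 d le_rfl T subset_rfl G hG hgG.le
    have iY : ∀ i ∈ T, Integrable (Y i) μ := fun i hi =>
      ((memLp_two_iff_integrable_sq (hm i hi).aestronglyMeasurable).2 (hi2 i hi)).integrable
        (by norm_num)
    have ic : ∀ i ∈ T, Integrable (fun ω => clip (√G) (Y i ω)) μ := fun i hi =>
      integrable_of_abs_le ((clip_mono _).measurable.comp (hm i hi)) fun ω => abs_clip_le hs.le _
    -- the mean of the truncated variable is small because `Y i` itself is centred
    have hmn : ∀ i ∈ T, |∫ ω, clip (√G) (Y i ω) ∂μ| ≤ (∫ ω, (Y i ω) ^ 2 ∂μ) / √G := by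
      intro i hi
      have e : ∫ ω, clip (√G) (Y i ω) ∂μ = -∫ ω, (Y i ω - clip (√G) (Y i ω)) ∂μ := by
        rw [integral_sub (iY i hi) (ic i hi), hmean i hi]; ring
      rw [e, abs_neg, ← integral_div]
      refine abs_integral_le_integral_abs.trans ?_
      exact integral_mono ((iY i hi).sub (ic i hi)).abs ((hi2 i hi).div_const _)
        fun ω => abs_sub_clip_le hs _
    set R : Ω → ℝ := fun ω => ∑ i ∈ T, (Y i ω) ^ 2 / √G with hR
    have iR : Integrable R μ := integrable_finsetSum _ fun i hi => (hi2 i hi).div_const _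
    have hRint : ∫ ω, R ω ∂μ = g / √G := by
      rw [integral_finsetSum _ fun i hi => (hi2 i hi).div_const _, hg, Finset.sum_div]
      exact Finset.sum_congr rfl fun i _ => integral_div _ _
    have hbound : ∀ ω, T.sup' hn (fun k => |∑ i ∈ Finset.Icc (1 : Fin d → ℕ) k, Y i ω|)
        ≤ (N ω / √G ^ 3 + R ω) + (√G + g / √G) := by
      intro ω
      refine Finset.sup'_le _ _ fun k hk => ?_
      have hk' : k ≤ n := (Finset.mem_Icc.1 hk).2
      have e1 : Finset.Icc (1 : Fin d → ℕ) k
          = restr T {i : Fin d → ℕ | ∀ a : Fin d, (a : ℕ) < d → i a ≤ k a} := by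
        ext i
        simp only [hT, Finset.mem_Icc, mem_restr, Set.mem_ofPred_eq]
        exact ⟨fun h => ⟨⟨h.1, h.2.trans hk'⟩, fun a _ => h.2 a⟩,
          fun h => ⟨h.1.1, fun a => h.2 a a.2⟩⟩
      have hNk := n4 _ ⟨k, rfl⟩ ω
      rw [← e1] at hNk
      have hsub : Finset.Icc (1 : Fin d → ℕ) k ⊆ T := Finset.Icc_subset_Icc le_rfl hk'
      set x := ∑ i ∈ Finset.Icc (1 : Fin d → ℕ) k, tau μ (√G) (Y i) ω with hx
      have h1 : |x| ≤ √G + N ω / √G ^ 3 := by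
        have h2 : |x| / √G ≤ 1 + (|x| / √G) ^ 4 := by
          generalize |x| / √G = u
          nlinarith [sq_nonneg (u ^ 2 - 1 / 2), sq_nonneg (u - 1 / 2)]
        rw [div_pow, Even.pow_abs (by decide), div_le_iff₀ hs] at h2
        have h3 : (1 + x ^ 4 / √G ^ 4) * √G = √G + x ^ 4 / √G ^ 3 := by field_simp
        rw [h3] at h2
        refine h2.trans ?_
        gcongr
      have h2 : |∑ i ∈ Finset.Icc (1 : Fin d → ℕ) k, Y i ω - x| ≤ R ω + g / √G := by
        rw [hx, ← Finset.sum_sub_distrib, hR, hg, Finset.sum_div, ← Finset.sum_add_distrib]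
        refine (Finset.abs_sum_le_sum_abs _ _).trans ?_
        refine (Finset.sum_le_sum_of_subset_of_nonneg hsub fun i _ _ => abs_nonneg _).trans ?_
        refine Finset.sum_le_sum fun i hi => ?_
        have e2 : Y i ω - tau μ (√G) (Y i) ω
            = (Y i ω - clip (√G) (Y i ω)) + ∫ ω', clip (√G) (Y i ω') ∂μ := by
          unfold tau; ring
        rw [e2]
        exact (abs_add_le _ _).trans (add_le_add (abs_sub_clip_le hs _) (hmn i hi))
      have h3 : ∑ i ∈ Finset.Icc (1 : Fin d → ℕ) k, Y i ω
          = x + (∑ i ∈ Finset.Icc (1 : Fin d → ℕ) k, Y i ω - x) := by ring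
      rw [h3]
      refine (abs_add_le _ _).trans ?_
      linarith
    have iN : Integrable (fun ω => N ω / √G ^ 3) μ := n1.div_const _
    have iNR : Integrable (fun ω => N ω / √G ^ 3 + R ω) μ := iN.add iR
    have hle := integral_mono_of_nonneg (μ := μ) (ae_of_all _ fun ω => by
        obtain ⟨k, hk⟩ := hn
        exact (abs_nonneg _).trans (Finset.le_sup'
          (fun k => |∑ i ∈ Finset.Icc (1 : Fin d → ℕ) k, Y i ω|) hk))
      (iNR.add (integrable_const (√G + g / √G))) (ae_of_all _ hbound)
    refine hle.trans ?_
    simp only [Pi.add_apply]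
    rw [integral_add iNR (integrable_const _), integral_add iN iR, integral_div, hRint]
    simp only [integral_const, probReal_univ, one_smul]
    have hGs : √G ^ 2 = G := Real.sq_sqrt hG.le
    have t1 : (∫ ω, N ω ∂μ) / √G ^ 3 ≤ Kconst d * √G := by
      rw [div_le_iff₀ (by positivity)]
      calc _ ≤ _ := n2
        _ = Kconst d * (√G ^ 2) ^ 2 := by rw [hGs]
        _ = _ := by ring
    have t2 : g / √G ≤ √G := by
      rw [div_le_iff₀ hs]; nlinarith
    linarith
  have hlim : Tendsto (fun G => (3 + Kconst d) * √G) (nhdsWithin g (Set.Ioi g))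
      (nhds ((3 + Kconst d) * √g)) :=
    ((Real.continuous_sqrt.const_mul _).tendsto g).mono_left nhdsWithin_le_nhds
  exact ge_of_tendsto hlim (eventually_nhdsWithin_of_forall fun G hG => main G hG)
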